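/- Let δα, θα0, φα, ζα, δβ, θβ0, φβ, ζβ ∈ ℝ and suppose there exist integers ℓ, p, q, r, s such that δβ = −δα + π/2 + ℓ·π, θβ0 = (−1)^r·θα0 + π + 2p·π, ζβ = φα + (r+1)·π + 2q·π, and φβ = −ζα + (r+1)·π + 2s·π. Then the zeroth-order walk operator G⁰ = C(δβ, θβ0, φβ, ζβ) · C(δα, θα0, φα, ζα) equals σy or −σy; in particular (G⁰)² = 1. -/

import Mathlib

open Matrix Filter Topology

noncomputable def σx : Matrix (Fin 2) (Fin 2) ℂ := !![0, 1; 1, 0]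
noncomputable def σy : Matrix (Fin 2) (Fin 2) ℂ := !![0, -Complex.I; Complex.I, 0]
noncomputable def σz : Matrix (Fin 2) (Fin 2) ℂ := !![1, 0; 0, -1]

/-- Rotation about the x-axis by angle `t`. -/
noncomputable def Rx (t : ℝ) : Matrix (Fin 2) (Fin 2) ℂ :=
  !![(Real.cos (t/2) : ℂ), -Complex.I * Real.sin (t/2);
     -Complex.I * Real.sin (t/2), (Real.cos (t/2) : ℂ)]

/-- Rotation about the y-axis by angle `t`. -/
noncomputable def Ry (t : ℝ) : Matrix (Fin 2) (Fin 2) ℂ :=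
  !![(Real.cos (t/2) : ℂ), -(Real.sin (t/2) : ℂ);
     (Real.sin (t/2) : ℂ), (Real.cos (t/2) : ℂ)]

/-- Rotation about the z-axis by angle `t`. -/
noncomputable def Rz (t : ℝ) : Matrix (Fin 2) (Fin 2) ℂ :=
  !![Complex.exp (-(Complex.I * t) / 2), 0; 0, Complex.exp ((Complex.I * t) / 2)]

/-- Fourier-space shift operator at momentum `κ`. -/
noncomputable def Sh (κ : ℝ) : Matrix (Fin 2) (Fin 2) ℂ :=
  !![Complex.exp (Complex.I * κ), 0; 0, Complex.exp (-(Complex.I * κ))]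

/-- The coin operator `Cα`. -/
noncomputable def Calpha (α : ℝ) : Matrix (Fin 2) (Fin 2) ℂ :=
  !![(Real.sin α : ℂ), -Complex.I * Real.cos α;
     Complex.I * Real.cos α, -(Real.sin α : ℂ)]

/-- The coin operator `Cβ`. -/
noncomputable def Cbeta (α : ℝ) : Matrix (Fin 2) (Fin 2) ℂ :=
  !![-(Real.cos α : ℂ), -Complex.I * Real.sin α;
     -Complex.I * Real.sin α, -(Real.cos α : ℂ)]

/-- The massless homogeneous Y–Y twisted quantum walk unitary at momentum `k`,
coin angle `α` and twist angle `θ`: `U_YY = (W_β · W_α)²` with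
`W_α = S(k)·Cα` and `W_β = R_y(−θ)·S(k)·R_y(θ)·Cβ`. -/
noncomputable def UYY (k α θ : ℝ) : Matrix (Fin 2) (Fin 2) ℂ :=
  (Ry (-θ) * Sh k * Ry θ * Cbeta α * (Sh k * Calpha α)) *
    (Ry (-θ) * Sh k * Ry θ * Cbeta α * (Sh k * Calpha α))

/-- The massless alternate-twist walk unitary at momentum `k`, coin angle `α`
and twist angle `θ`: `U_XI = W_{β2} · W_α · W_{β1} · W_α` with `W_α = S(k)·Cα`,
`W_{β1} = R_x(−θ)·S(k)·R_x(θ)·Cβ` and `W_{β2} = S(k)·Cβ`. -/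
noncomputable def UXI (k α θ : ℝ) : Matrix (Fin 2) (Fin 2) ℂ :=
  (Sh k * Cbeta α) * (Sh k * Calpha α) *
    (Rx (-θ) * Sh k * Rx θ * Cbeta α) * (Sh k * Calpha α)

/-- The general coin operator `C(δ,θ,φ,ζ) = e^{iδ}·R_z(ζ)·R_y(θ)·R_z(φ)`. -/
noncomputable def coin (δ θ φ ζ : ℝ) : Matrix (Fin 2) (Fin 2) ℂ :=
  Complex.exp (Complex.I * δ) • (Rz ζ * Ry θ * Rz φ)

/-!
Left multiplication by `σy = i·R_y(π)` acts on coins by a shift of angles,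
`σy·C(δ, θ, φ, ζ) = C(δ + π/2, θ + π, φ, -ζ)`. Since `R_z(nπ)` conjugates `R_y(θ)` to
`R_y((-1)ⁿθ)`, the angles `(θ, φ, ζ)` and `((-1)ⁿθ, φ + nπ, ζ - nπ)` define the same coin.
With `C(δ, θ, φ, ζ)⁻¹ = C(-δ, -θ, -ζ, -φ)`, these two facts give `Cβ = ±σy·Cα⁻¹`, the sign coming
from the antiperiodicity of the coin in each of its four arguments.
-/

section

open Real

theorem Ry_zero : Ry 0 = 1 := by
  simp [Ry, Matrix.one_fin_two]

theorem Rz_zero : Rz 0 = 1 := by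
  simp [Rz, Matrix.one_fin_two]

theorem Ry_add (a b : ℝ) : Ry (a + b) = Ry a * Ry b := by
  simp only [Ry, Matrix.mul_fin_two, add_div, Real.cos_add, Real.sin_add]
  push_cast
  ring_nf

theorem Rz_add (a b : ℝ) : Rz (a + b) = Rz a * Rz b := by
  simp only [Rz, Matrix.mul_fin_two, mul_zero, zero_mul, add_zero, zero_add, ← Complex.exp_add]
  push_cast
  ring_nf

theorem Ry_neg_mul_Ry (t : ℝ) : Ry (-t) * Ry t = 1 := by
  rw [← Ry_add, neg_add_cancel, Ry_zero]

theorem Rz_neg_mul_Rz (t : ℝ) : Rz (-t) * Rz t = 1 := by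
  rw [← Rz_add, neg_add_cancel, Rz_zero]

theorem Rz_pi : Rz π = -Complex.I • σz := by
  have hpos : Complex.exp (Complex.I * π / 2) = Complex.I := by
    rw [mul_comm, mul_div_right_comm, Complex.exp_pi_div_two_mul_I]
  have hneg : Complex.exp (-(Complex.I * π) / 2) = -Complex.I := by
    rw [neg_div, Complex.exp_neg, hpos, Complex.inv_I]
  simp [Rz, σz, hpos, hneg]

theorem σy_eq_I_smul_Ry_pi : σy = Complex.I • Ry π := by
  simp [Ry, σy]

theorem σy_mul_σy : σy * σy = 1 := by
  simp [σy, Matrix.one_fin_two]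

theorem σz_mul_σz : σz * σz = 1 := by
  simp [σz, Matrix.one_fin_two]

theorem σy_mul_Rz (t : ℝ) : σy * Rz t = Rz (-t) * σy := by
  simp [σy, Rz, mul_comm]

theorem σz_mul_Ry (t : ℝ) : σz * Ry t = Ry (-t) * σz := by
  simp [σz, Ry, neg_div]

theorem Ry_antiperiodic : Function.Antiperiodic Ry (2 * π) := fun t ↦ by
  simp [Ry, add_div]

theorem Rz_two_pi : Rz (2 * π) = -1 := by
  rw [two_mul, Rz_add, Rz_pi, Matrix.smul_mul, Matrix.mul_smul, σz_mul_σz, smul_smul]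
  simp

theorem Rz_antiperiodic : Function.Antiperiodic Rz (2 * π) := fun t ↦ by
  rw [Rz_add, Rz_two_pi, mul_neg_one]

theorem Ry_add_int_mul_two_pi (t : ℝ) (n : ℤ) : Ry (t + 2 * n * π) = n.negOnePow • Ry t := by
  rw [mul_comm 2, mul_assoc, ← zsmul_eq_mul]
  exact Ry_antiperiodic.add_zsmul_eq n

theorem Rz_add_int_mul_two_pi (t : ℝ) (n : ℤ) : Rz (t + 2 * n * π) = n.negOnePow • Rz t := by
  rw [mul_comm 2, mul_assoc, ← zsmul_eq_mul]
  exact Rz_antiperiodic.add_zsmul_eq n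

theorem Rz_int_mul_pi_mul_Ry (n : ℤ) (t : ℝ) :
    Rz (n * π) * Ry t = Ry ((-1) ^ n * t) * Rz (n * π) := by
  obtain ⟨k, rfl | rfl⟩ := n.even_or_odd'
  · have hturn : Rz ((2 * k : ℤ) * π) = k.negOnePow • 1 := by
      rw [← Rz_zero, ← Rz_add_int_mul_two_pi, zero_add]
      push_cast
      rfl
    rw [hturn, (even_two_mul k).neg_one_zpow, one_mul, smul_mul_assoc, mul_smul_comm, one_mul,
      mul_one]
  · have hturn : Rz ((2 * k + 1 : ℤ) * π) = k.negOnePow • -Complex.I • σz := by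
      rw [← Rz_pi, ← Rz_add_int_mul_two_pi]
      push_cast
      ring_nf
    rw [hturn, (odd_two_mul_add_one k).neg_one_zpow, neg_one_mul]
    simp only [smul_mul_assoc, mul_smul_comm, σz_mul_Ry]

theorem coin_neg_mul_coin (δ θ φ ζ : ℝ) :
    coin (-δ) (-θ) (-ζ) (-φ) * coin δ θ φ ζ = 1 := by
  have hphase : Complex.exp (Complex.I * (-δ : ℝ)) * Complex.exp (Complex.I * δ) = 1 := by
    simp [← Complex.exp_add]
  calc coin (-δ) (-θ) (-ζ) (-φ) * coin δ θ φ ζ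
      = Rz (-φ) * (Ry (-θ) * (Rz (-ζ) * Rz ζ) * Ry θ) * Rz φ := by
        rw [coin, coin, smul_mul_smul_comm, hphase, one_smul]
        simp only [Matrix.mul_assoc]
    _ = 1 := by rw [Rz_neg_mul_Rz, mul_one, Ry_neg_mul_Ry, mul_one, Rz_neg_mul_Rz]

theorem σy_mul_coin (δ θ φ ζ : ℝ) :
    σy * coin δ θ φ ζ = coin (δ + π / 2) (θ + π) φ (-ζ) := by
  have hphase : Complex.exp (Complex.I * (δ + π / 2 : ℝ)) =
      Complex.exp (Complex.I * δ) * Complex.I := by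
    push_cast
    rw [mul_add, Complex.exp_add, mul_comm Complex.I (π / 2 : ℂ), Complex.exp_pi_div_two_mul_I]
  calc σy * coin δ θ φ ζ
      = Complex.exp (Complex.I * δ) • (Rz (-ζ) * (σy * Ry θ) * Rz φ) := by
        rw [coin, Matrix.mul_smul, ← Matrix.mul_assoc, ← Matrix.mul_assoc, σy_mul_Rz,
          Matrix.mul_assoc (Rz (-ζ))]
    _ = coin (δ + π / 2) (θ + π) φ (-ζ) := by
        rw [coin, hphase, add_comm θ, Ry_add, σy_eq_I_smul_Ry_pi]
        simp only [Matrix.smul_mul, Matrix.mul_smul, smul_smul]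

theorem coin_neg_one_zpow_mul_add_sub (n : ℤ) (δ θ φ ζ : ℝ) :
    coin δ ((-1) ^ n * θ) (φ + n * π) (ζ - n * π) = coin δ θ φ ζ := by
  rw [coin, coin]
  congr 1
  calc Rz (ζ - n * π) * Ry ((-1) ^ n * θ) * Rz (φ + n * π)
      = Rz (ζ - n * π) * (Ry ((-1) ^ n * θ) * Rz (n * π)) * Rz φ := by
        rw [add_comm φ, Rz_add]
        simp only [Matrix.mul_assoc]
    _ = Rz (ζ - n * π) * Rz (n * π) * Ry θ * Rz φ := by
        rw [← Rz_int_mul_pi_mul_Ry]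
        simp only [Matrix.mul_assoc]
    _ = Rz ζ * Ry θ * Rz φ := by rw [← Rz_add, sub_add_cancel]

theorem coin_add_int_mul_antiperiods (δ θ φ ζ : ℝ) (l p m n : ℤ) :
    coin (δ + l * π) (θ + 2 * p * π) (φ + 2 * m * π) (ζ + 2 * n * π) =
      (l + p + m + n).negOnePow • coin δ θ φ ζ := by
  have hphase : Complex.exp (Complex.I * (δ + l * π : ℝ)) =
      l.negOnePow • Complex.exp (Complex.I * δ) := by
    rw [mul_comm, mul_comm Complex.I, Units.smul_def, zsmul_eq_mul]
    push_cast
    exact Complex.exp_mul_I_antiperiodic.add_int_mul_eq l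
  simp only [coin, hphase, Ry_add_int_mul_two_pi, Rz_add_int_mul_two_pi, smul_mul_assoc,
    mul_smul_comm, smul_assoc, smul_comm (Complex.exp _), smul_smul, Int.negOnePow_add]
  congr 1
  ac_rfl

theorem coin_eq_σy_mul_coin_neg (δ θ φ ζ : ℝ) (r : ℤ) :
    coin (δ + π / 2) ((-1) ^ r * θ + π) (-ζ + (r + 1) * π) (φ + (r + 1) * π) =
      σy * coin δ (-θ) (-ζ) (-φ) := by
  have hθ : (-1 : ℝ) ^ r * θ = (-1) ^ (r + 1) * -θ := by
    rw [zpow_add_one₀ (by norm_num)]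
    ring
  have hζ : φ + (r + 1) * π = -(-φ - (r + 1) * π) := by ring
  have hcoin := coin_neg_one_zpow_mul_add_sub (r + 1) δ (-θ) (-ζ) (-φ)
  push_cast at hcoin
  rw [hθ, hζ, ← σy_mul_coin, hcoin]

end

/-- Under the parameter constraints of the homogeneous Y-twist theorem, the
zeroth-order walk operator `G⁰ = Cβ⁰ · Cα⁰` equals `±σy`; in particular it
squares to the identity. -/
theorem G0_eq_pm_sigma_y (δα θα0 φα ζα δβ θβ0 φβ ζβ : ℝ)
    (h : ∃ l p q r s : ℤ,
      δβ = -δα + Real.pi / 2 + l * Real.pi ∧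
      θβ0 = (-1 : ℝ) ^ r * θα0 + Real.pi + 2 * p * Real.pi ∧
      ζβ = φα + (r + 1) * Real.pi + 2 * q * Real.pi ∧
      φβ = -ζα + (r + 1) * Real.pi + 2 * s * Real.pi) :
    (coin δβ θβ0 φβ ζβ * coin δα θα0 φα ζα = σy ∨
      coin δβ θβ0 φβ ζβ * coin δα θα0 φα ζα = -σy) ∧
    (coin δβ θβ0 φβ ζβ * coin δα θα0 φα ζα) *
      (coin δβ θβ0 φβ ζβ * coin δα θα0 φα ζα) = 1 := by
  obtain ⟨l, p, q, r, s, rfl, rfl, rfl, rfl⟩ := h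
  rw [coin_add_int_mul_antiperiods, coin_eq_σy_mul_coin_neg, smul_mul_assoc, Matrix.mul_assoc,
    coin_neg_mul_coin, mul_one]
  obtain hsign | hsign := Int.units_eq_one_or (l + p + s + q).negOnePow <;>
    simp [hsign, σy_mul_σy]
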